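/- Let U ⊆ ℝ^N be open, μ0 ∈ U, and let λ, Δ00, Δ10, Ω00, Ω01 ∈ C^∞(U) with λ > 0, Δ00 > 0 and λ(μ0) > 1; set ρ = 1/λ, λ^0 = λ(μ0), ρ^0 = 1/λ^0. Let D(s;μ) be a family of functions, defined and strictly positive for μ ∈ U and all sufficiently small s > 0, invertible with respect to s near s = 0 with inverse D^{-1}(·;μ). Assume that for every ℓ ∈ (1, min{λ^0, 2}) there is R ∈ 𝓕^∞_ℓ(μ0) with D(s;μ) = s^{λ(μ)}(Δ00(μ) + Δ10(μ)·s + R(s;μ)), and for every η ∈ (ρ^0, min{2ρ^0, 1}) there is R' ∈ 𝓕^∞_η(μ0) with D^{-1}(s;μ) = s^{ρ(μ)}(Ω00(μ) + Ω01(μ)·s^{ρ(μ)} + R'(s;μ)). Then, on a neighborhood of μ0, Ω00 = Δ00^{−ρ} and Ω01 = −ρ·Δ00^{−(1+2ρ)}·Δ10. -/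

import Mathlib

/-!
Fix `μ` near `μ0` and put `ρ = 1/λ`. Write `D(s) = s^λ h(s)` and `D⁻¹(y) = y^ρ k(y)`, where
`h(s) = Δ00 + Δ10 s + o(s)` and `k(y) = Ω00 + Ω01 y^ρ + o(y^ρ)`. Since `D(s)^ρ = s h(s)^ρ`, the
identity `D⁻¹(D(s)) = s` becomes `k(D(s)) = h(s)^(-ρ)`. The left-hand side is
`Ω00 + Ω01 Δ00^ρ s + o(s)`, the right-hand side is `Δ00^(-ρ) - ρ Δ00^(-ρ-1) Δ10 s + o(s)`, and the
coefficients of a first-order expansion are unique.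
-/

open Topology Filter Set

/-- Partial derivative with respect to `s`. -/
noncomputable def dS {N : ℕ} (ψ : ℝ → (Fin N → ℝ) → ℝ) : ℝ → (Fin N → ℝ) → ℝ :=
  fun s μ => deriv (fun t => ψ t μ) s

/-- Partial derivative with respect to the `i`-th component of `μ`. -/
noncomputable def dMu {N : ℕ} (i : Fin N) (ψ : ℝ → (Fin N → ℝ) → ℝ) : ℝ → (Fin N → ℝ) → ℝ :=
  fun s μ => fderiv ℝ (fun m => ψ s m) μ (Pi.single i 1)

/-- Mixed partial derivative `∂^{|ν|}ψ/(∂s^{ν0} ∂μ1^{ν1} ⋯ ∂μN^{νN})`. -/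
noncomputable def mixedDeriv {N : ℕ} (ν0 : ℕ) (ν : Fin N → ℕ) (ψ : ℝ → (Fin N → ℝ) → ℝ) :
    ℝ → (Fin N → ℝ) → ℝ :=
  (dS (N := N))^[ν0] ((List.finRange N).foldr (fun i φ => (dMu i)^[ν i] φ) ψ)

/-- ψ ∈ 𝓕^K_L(μ0): the class of (L,K)-flat functions with respect to s at μ0. -/
def MemF {N : ℕ} (K : ℕ∞) (L : ℝ) (U : Set (Fin N → ℝ)) (μ0 : Fin N → ℝ)
    (ψ : ℝ → (Fin N → ℝ) → ℝ) : Prop :=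
  (∃ ε > 0, ContDiffOn ℝ K (fun p : ℝ × (Fin N → ℝ) => ψ p.1 p.2) ((Set.Ioo 0 ε) ×ˢ U)) ∧
  ∀ ν0 : ℕ, ∀ ν : Fin N → ℕ, (↑(ν0 + ∑ i, ν i) : ℕ∞) ≤ K →
    ∃ V ⊆ U, V ∈ 𝓝 μ0 ∧ ∃ C > 0, ∃ s0 > 0, ∀ μ ∈ V, ∀ s ∈ Set.Ioo (0:ℝ) s0,
      |mixedDeriv ν0 ν ψ s μ| ≤ C * s ^ (L - (ν0 : ℝ))

/-- ψ ∈ 𝓕^K_L(W) = ⋂_{μ0 ∈ W} 𝓕^K_L(μ0). -/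
def MemFSet {N : ℕ} (K : ℕ∞) (L : ℝ) (U : Set (Fin N → ℝ)) (W : Set (Fin N → ℝ))
    (ψ : ℝ → (Fin N → ℝ) → ℝ) : Prop :=
  ∀ μ0 ∈ W, MemF K L U μ0 ψ

/-- The Écalle–Roussarie compensator. -/
noncomputable def omegaComp (s α : ℝ) : ℝ :=
  if α = 0 then -Real.log s else (s ^ (-α) - 1) / α

/-- `Λ_{i,k}(μ) = ∏_{j=i+1}^{k} λ_j(μ)` (1-based), here with 0-based index family. -/
noncomputable def LamProd {N n : ℕ} (lam : Fin n → (Fin N → ℝ) → ℝ) (i k : ℕ)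
    (μ : Fin N → ℝ) : ℝ :=
  ∏ j ∈ Finset.univ.filter (fun j : Fin n => i ≤ (j : ℕ) ∧ (j : ℕ) < k), lam j μ

/-- `A_{a+1,k}(μ) = ∏_{i=a+1}^{k} Δ_i(μ)^{Λ_{i,k}(μ)}` (1-based), 0-based lower bound `a`. -/
noncomputable def Acoef {N n : ℕ} (lam Δ : Fin n → (Fin N → ℝ) → ℝ) (a k : ℕ)
    (μ : Fin N → ℝ) : ℝ :=
  ∏ i ∈ Finset.univ.filter (fun i : Fin n => a ≤ (i : ℕ) ∧ (i : ℕ) < k),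
    (Δ i μ) ^ (LamProd lam ((i : ℕ) + 1) k μ)

/-- Composition `D_n ∘ ⋯ ∘ D_1` (0-based: `D (n-1) ∘ ⋯ ∘ D 0`). -/
noncomputable def iterComp {N n : ℕ} (D : Fin n → ℝ → (Fin N → ℝ) → ℝ) :
    ℝ → (Fin N → ℝ) → ℝ :=
  fun s μ => (List.finRange n).foldl (fun t i => D i t μ) s

section FirstOrderExpansion

open Asymptotics

variable {α β 𝕜 : Type*} [NontriviallyNormedField 𝕜] {l : Filter α} {ε u v : α → 𝕜} {a b c d : 𝕜}

/-- First-order asymptotic expansion `u = a + b ε + o(ε)` along the filter `l`, with respect to an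
arbitrary gauge function `ε`, so that it covers expansions in a real power of the variable. -/
def HasFirstOrderExpansion (l : Filter α) (ε u : α → 𝕜) (a b : 𝕜) : Prop :=
  (fun x => u x - (a + b * ε x)) =o[l] ε

namespace HasFirstOrderExpansion

theorem congr' (h : HasFirstOrderExpansion l ε u a b) (huv : u =ᶠ[l] v) :
    HasFirstOrderExpansion l ε v a b :=
  IsLittleO.congr' h (huv.fun_sub .rfl) .rfl

theorem comp_tendsto (h : HasFirstOrderExpansion l ε u a b) {m : Filter β} {φ : β → α}
    (hφ : Tendsto φ m l) :
    HasFirstOrderExpansion m (fun y => ε (φ y)) (fun y => u (φ y)) a b :=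
  IsLittleO.comp_tendsto h hφ

theorem isBigO_sub (h : HasFirstOrderExpansion l ε u a b) : (fun x => u x - a) =O[l] ε :=
  (IsLittleO.isBigO h |>.add (isBigO_const_mul_self b ε l)).congr_left fun x => by ring

theorem tendsto (h : HasFirstOrderExpansion l ε u a b) (hε : Tendsto ε l (𝓝 0)) :
    Tendsto u l (𝓝 a) :=
  tendsto_sub_nhds_zero_iff.1 (h.isBigO_sub.trans_tendsto hε)

theorem comp_hasDerivAt (h : HasFirstOrderExpansion l ε u a b) (hε : Tendsto ε l (𝓝 0))
    {φ : 𝕜 → 𝕜} {φ' : 𝕜} (hφ : HasDerivAt φ φ' a) :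
    HasFirstOrderExpansion l ε (fun x => φ (u x)) (φ a) (φ' * b) := by
  have hlin : (fun x => φ (u x) - φ a - (u x - a) * φ') =o[l] ε :=
    ((hasDerivAt_iff_isLittleO.1 hφ).comp_tendsto (h.tendsto hε)).trans_isBigO h.isBigO_sub
  exact (hlin.add (IsLittleO.const_mul_left h φ')).congr_left fun x => by ring

theorem change_gauge (h : HasFirstOrderExpansion l ε u a b) {δ : α → 𝕜}
    (hεδ : (fun x => ε x - c * δ x) =o[l] δ) : HasFirstOrderExpansion l δ u a (b * c) := by
  have hε : ε =O[l] δ :=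
    (hεδ.isBigO.add (isBigO_const_mul_self c δ l)).congr_left fun x => by ring
  exact ((IsLittleO.trans_isBigO h hε).add (hεδ.const_mul_left b)).congr_left fun x => by ring

theorem unique (hab : HasFirstOrderExpansion l ε u a b) (hcd : HasFirstOrderExpansion l ε u c d)
    (hε : Tendsto ε l (𝓝 0)) (hε0 : ∃ᶠ x in l, ε x ≠ 0) : a = c ∧ b = d := by
  have : l.NeBot := neBot_iff.2 fun hl => frequently_bot (hl ▸ hε0)
  obtain rfl : a = c := tendsto_nhds_unique (hab.tendsto hε) (hcd.tendsto hε)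
  refine ⟨rfl, by_contra fun hbd => isLittleO_irrefl hε0 ?_⟩
  refine (isLittleO_const_mul_left_iff (sub_ne_zero.2 hbd)).1 ?_
  exact (IsLittleO.sub hcd hab).congr_left fun x => by ring

end HasFirstOrderExpansion

end FirstOrderExpansion

section OneVariable

open Asymptotics

theorem isLittleO_rpow_rpow_nhdsGT_zero {p q : ℝ} (hpq : p < q) :
    (fun s : ℝ => s ^ q) =o[𝓝[>] 0] fun s => s ^ p := by
  have hpos : ∀ᶠ s in 𝓝[>] (0 : ℝ), 0 < s := self_mem_nhdsWithin
  refine (isLittleO_iff_tendsto' ?_).2 ?_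
  · filter_upwards [hpos] with s hs h0
    exact absurd h0 (Real.rpow_pos_of_pos hs p).ne'
  · have hlim : Tendsto (fun s : ℝ => s ^ (q - p)) (𝓝[>] 0) (𝓝 0) :=
      (tendsto_id.mono_left nhdsWithin_le_nhds).rpow_const_nhds_zero (sub_pos.2 hpq)
    refine hlim.congr' ?_
    filter_upwards [hpos] with s hs using Real.rpow_sub hs q p

variable {f : ℝ → ℝ} {r a : ℝ}

theorem eventually_pos_of_tendsto_div_rpow (ha : 0 < a)
    (hf : Tendsto (fun s => f s / s ^ r) (𝓝[>] 0) (𝓝 a)) : ∀ᶠ s in 𝓝[>] (0 : ℝ), 0 < f s := by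
  filter_upwards [eventually_mem_nhdsWithin, hf.eventually_const_lt ha] with s hs hfs
  exact (div_pos_iff_of_pos_right (Real.rpow_pos_of_pos hs r)).1 hfs

theorem tendsto_nhdsGT_zero_of_tendsto_div_rpow (hr : 0 < r) (ha : 0 < a)
    (hf : Tendsto (fun s => f s / s ^ r) (𝓝[>] 0) (𝓝 a)) : Tendsto f (𝓝[>] 0) (𝓝[>] 0) := by
  have hpos : ∀ᶠ s in 𝓝[>] (0 : ℝ), 0 < s := self_mem_nhdsWithin
  have hpow : Tendsto (fun s : ℝ => s ^ r) (𝓝[>] 0) (𝓝 0) :=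
    (tendsto_id.mono_left nhdsWithin_le_nhds).rpow_const_nhds_zero hr
  have hprod := hpow.mul hf
  rw [zero_mul] at hprod
  refine tendsto_nhdsWithin_iff.2
    ⟨hprod.congr' ?_, eventually_pos_of_tendsto_div_rpow ha hf⟩
  filter_upwards [hpos] with s hs using mul_div_cancel₀ _ (Real.rpow_pos_of_pos hs r).ne'

theorem rpow_inv_eq_mul_div_rpow_inv {s y : ℝ} (hr : r ≠ 0) (hs : 0 < s) (hy : 0 ≤ y) :
    y ^ r⁻¹ = s * (y / s ^ r) ^ r⁻¹ := by
  rw [Real.div_rpow hy (by positivity), Real.rpow_rpow_inv hs.le hr, mul_div_cancel₀ _ hs.ne']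

theorem isLittleO_rpow_inv_sub_of_tendsto_div_rpow (hr : r ≠ 0) (ha : 0 < a)
    (hf : Tendsto (fun s => f s / s ^ r) (𝓝[>] 0) (𝓝 a)) :
    (fun s => f s ^ r⁻¹ - a ^ r⁻¹ * s) =o[𝓝[>] 0] fun s => s := by
  have hpos : ∀ᶠ s in 𝓝[>] (0 : ℝ), 0 < s ∧ 0 < f s :=
    eventually_mem_nhdsWithin.and (eventually_pos_of_tendsto_div_rpow ha hf)
  have hlim : (fun s => (f s / s ^ r) ^ r⁻¹ - a ^ r⁻¹) =o[𝓝[>] 0] fun _ => (1 : ℝ) :=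
    (isLittleO_one_iff ℝ).2 (tendsto_sub_nhds_zero_iff.2 (hf.rpow_const (Or.inl ha.ne')))
  refine (hlim.mul_isBigO (isBigO_refl (fun s : ℝ => s) _)).congr' ?_ (by simp)
  filter_upwards [hpos] with s ⟨hs, hfs⟩
  rw [rpow_inv_eq_mul_div_rpow_inv hr hs hfs.le]
  ring

theorem coeff_eq_of_eventually_leftInverse {g : ℝ → ℝ} {b p q : ℝ} (hr : 0 < r) (ha : 0 < a)
    (hf : HasFirstOrderExpansion (𝓝[>] 0) (fun s => s) (fun s => f s / s ^ r) a b)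
    (hg : HasFirstOrderExpansion (𝓝[>] 0) (fun y => y ^ r⁻¹) (fun y => g y / y ^ r⁻¹) p q)
    (hgf : ∀ᶠ s in 𝓝[>] (0 : ℝ), g (f s) = s) :
    p = a ^ (-r⁻¹) ∧ q = -r⁻¹ * a ^ (-(1 + 2 * r⁻¹)) * b := by
  have hid : Tendsto (fun s : ℝ => s) (𝓝[>] 0) (𝓝 0) := tendsto_id.mono_left nhdsWithin_le_nhds
  have hlim := hf.tendsto hid
  have hf0 := tendsto_nhdsGT_zero_of_tendsto_div_rpow hr ha hlim
  have hpos : ∀ᶠ s in 𝓝[>] (0 : ℝ), 0 < s ∧ 0 < f s :=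
    eventually_mem_nhdsWithin.and (eventually_pos_of_tendsto_div_rpow ha hlim)
  have hleft : HasFirstOrderExpansion (𝓝[>] 0) (fun s => s) (fun s => g (f s) / f s ^ r⁻¹)
      p (q * a ^ r⁻¹) :=
    (hg.comp_tendsto hf0).change_gauge (isLittleO_rpow_inv_sub_of_tendsto_div_rpow hr.ne' ha hlim)
  have hright : HasFirstOrderExpansion (𝓝[>] 0) (fun s => s) (fun s => (f s / s ^ r) ^ (-r⁻¹))
      (a ^ (-r⁻¹)) (-r⁻¹ * a ^ (-r⁻¹ - 1) * b) :=
    hf.comp_hasDerivAt hid (Real.hasDerivAt_rpow_const (Or.inl ha.ne'))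
  have heq : (fun s => g (f s) / f s ^ r⁻¹) =ᶠ[𝓝[>] 0] fun s => (f s / s ^ r) ^ (-r⁻¹) := by
    filter_upwards [hgf, hpos] with s hgf ⟨hs, hfs⟩
    rw [hgf, rpow_inv_eq_mul_div_rpow_inv hr.ne' hs hfs.le, Real.rpow_neg (by positivity),
      div_mul_cancel_left₀ hs.ne']
  obtain ⟨hp, hq⟩ := (hleft.congr' heq).unique hright hid
    (hpos.mono fun s hs => hs.1.ne').frequently
  refine ⟨hp, mul_right_cancel₀ (Real.rpow_pos_of_pos ha r⁻¹).ne' ?_⟩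
  have hpow : a ^ (-r⁻¹ - 1) = a ^ (-(1 + 2 * r⁻¹)) * a ^ r⁻¹ := by
    rw [← Real.rpow_add ha]
    ring_nf
  rw [hq, hpow]
  ring

end OneVariable

section Family

open Asymptotics

variable {N : ℕ}

theorem mixedDeriv_zero_zero (ψ : ℝ → (Fin N → ℝ) → ℝ) : mixedDeriv 0 0 ψ = ψ := by
  simp [mixedDeriv]

variable {K : ℕ∞} {L : ℝ} {U : Set (Fin N → ℝ)} {μ0 : Fin N → ℝ} {ψ : ℝ → (Fin N → ℝ) → ℝ}

theorem MemF.mem_nhds (h : MemF K L U μ0 ψ) : U ∈ 𝓝 μ0 := by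
  obtain ⟨V, hVU, hV, -⟩ := h.2 0 0 (by simp)
  exact mem_of_superset hV hVU

theorem MemF.eventually_isBigO (h : MemF K L U μ0 ψ) :
    ∀ᶠ μ in 𝓝 μ0, (fun s => ψ s μ) =O[𝓝[>] 0] fun s => s ^ L := by
  obtain ⟨V, -, hV, C, -, s0, hs0, hbound⟩ := h.2 0 0 (by simp)
  filter_upwards [hV] with μ hμ
  refine .of_bound C ?_
  filter_upwards [Ioo_mem_nhdsGT hs0] with s hs
  have hψ := hbound μ hμ s hs
  rw [mixedDeriv_zero_zero, Nat.cast_zero, sub_zero] at hψ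
  rwa [Real.norm_eq_abs, Real.norm_of_nonneg (Real.rpow_nonneg hs.1.le L)]

theorem MemF.eventually_hasFirstOrderExpansion (h : MemF K L U μ0 ψ) {f : ℝ → (Fin N → ℝ) → ℝ}
    {κ σ a b : (Fin N → ℝ) → ℝ} (hσ : ∀ᶠ μ in 𝓝 μ0, σ μ < L)
    (hf : ∃ s0 > 0, ∀ μ ∈ U, ∀ s ∈ Set.Ioo (0 : ℝ) s0,
      f s μ = s ^ κ μ * (a μ + b μ * s ^ σ μ + ψ s μ)) :
    ∀ᶠ μ in 𝓝 μ0, HasFirstOrderExpansion (𝓝[>] 0) (fun s => s ^ σ μ)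
      (fun s => f s μ / s ^ κ μ) (a μ) (b μ) := by
  obtain ⟨s0, hs0, hf⟩ := hf
  filter_upwards [h.mem_nhds, h.eventually_isBigO, hσ] with μ hμ hψ hσμ
  refine (hψ.trans_isLittleO (isLittleO_rpow_rpow_nhdsGT_zero hσμ)).congr' ?_ .rfl
  filter_upwards [Ioo_mem_nhdsGT hs0] with s hs
  rw [hf μ hμ s hs, mul_div_cancel_left₀ _ (Real.rpow_pos_of_pos hs.1 _).ne']
  ring

theorem dulac_inverse_coeff_gt_one_general {K' : ℕ∞} {ℓ η : ℝ}
    {lam Δ00 Δ10 Ω00 Ω01 : (Fin N → ℝ) → ℝ} {D Dinv R R' : ℝ → (Fin N → ℝ) → ℝ}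
    (hlam : ContinuousAt lam μ0) (hlampos : 0 < lam μ0) (hΔ00pos : ∀ μ ∈ U, 0 < Δ00 μ)
    (hℓ : 1 < ℓ) (hη : (lam μ0)⁻¹ < η)
    (hinv : ∃ s0 > 0, ∀ μ ∈ U, ∀ s ∈ Set.Ioo (0 : ℝ) s0, Dinv (D s μ) μ = s)
    (hR : MemF K ℓ U μ0 R)
    (hD : ∃ s0 > 0, ∀ μ ∈ U, ∀ s ∈ Set.Ioo (0 : ℝ) s0,
      D s μ = s ^ lam μ * (Δ00 μ + Δ10 μ * s + R s μ))
    (hR' : MemF K' η U μ0 R')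
    (hDinv : ∃ s0 > 0, ∀ μ ∈ U, ∀ s ∈ Set.Ioo (0 : ℝ) s0,
      Dinv s μ = s ^ (lam μ)⁻¹ * (Ω00 μ + Ω01 μ * s ^ (lam μ)⁻¹ + R' s μ)) :
    ∃ V ⊆ U, V ∈ 𝓝 μ0 ∧ ∀ μ ∈ V,
      Ω00 μ = (Δ00 μ) ^ (-(lam μ)⁻¹) ∧
      Ω01 μ = -(lam μ)⁻¹ * (Δ00 μ) ^ (-(1 + 2 * (lam μ)⁻¹)) * Δ10 μ := by
  have hDexp : ∀ᶠ μ in 𝓝 μ0, HasFirstOrderExpansion (𝓝[>] 0) (fun s => s)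
      (fun s => D s μ / s ^ lam μ) (Δ00 μ) (Δ10 μ) := by
    simpa only [Real.rpow_one] using hR.eventually_hasFirstOrderExpansion (σ := fun _ => 1)
      (.of_forall fun _ => hℓ) (by simpa only [Real.rpow_one] using hD)
  have hDinvexp := hR'.eventually_hasFirstOrderExpansion
    ((hlam.inv₀ hlampos.ne').eventually_lt_const hη) hDinv
  obtain ⟨s0, hs0, hinv⟩ := hinv
  have hcoeff : ∀ᶠ μ in 𝓝 μ0, μ ∈ U ∧ Ω00 μ = (Δ00 μ) ^ (-(lam μ)⁻¹) ∧
      Ω01 μ = -(lam μ)⁻¹ * (Δ00 μ) ^ (-(1 + 2 * (lam μ)⁻¹)) * Δ10 μ := by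
    filter_upwards [hR.mem_nhds, hlam.eventually_const_lt hlampos, hDexp, hDinvexp]
      with μ hμ hlamμ hDμ hDinvμ
    exact ⟨hμ, coeff_eq_of_eventually_leftInverse hlamμ (hΔ00pos μ hμ) hDμ hDinvμ
      (mem_of_superset (Ioo_mem_nhdsGT hs0) (hinv μ hμ))⟩
  exact ⟨_, fun μ hμ => hμ.1, hcoeff, fun μ hμ => hμ.2⟩

end Family

/-- Lemma 4.12: coefficients of the inverse of a Dulac map when λ⁰ > 1. -/
theorem dulac_inverse_coeff_gt_one {N : ℕ} (U : Set (Fin N → ℝ)) (hU : IsOpen U)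
    (μ0 : Fin N → ℝ) (hμ0 : μ0 ∈ U)
    (lam Δ00 Δ10 Ω00 Ω01 : (Fin N → ℝ) → ℝ)
    (hlam : ContDiffOn ℝ (⊤ : ℕ∞) lam U) (hΔ00 : ContDiffOn ℝ (⊤ : ℕ∞) Δ00 U)
    (hΔ10 : ContDiffOn ℝ (⊤ : ℕ∞) Δ10 U) (hΩ00 : ContDiffOn ℝ (⊤ : ℕ∞) Ω00 U)
    (hΩ01 : ContDiffOn ℝ (⊤ : ℕ∞) Ω01 U)
    (hlampos : ∀ μ ∈ U, 0 < lam μ) (hΔ00pos : ∀ μ ∈ U, 0 < Δ00 μ)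
    (hlamgt : 1 < lam μ0)
    (D Dinv : ℝ → (Fin N → ℝ) → ℝ)
    (hDpos : ∃ s0 > 0, ∀ μ ∈ U, ∀ s ∈ Set.Ioo (0:ℝ) s0, 0 < D s μ)
    (hinv : ∃ s0 > 0, ∀ μ ∈ U, ∀ s ∈ Set.Ioo (0:ℝ) s0, Dinv (D s μ) μ = s)
    (hD : ∀ ℓ ∈ Set.Ioo (1:ℝ) (min (lam μ0) 2),
      ∃ R : ℝ → (Fin N → ℝ) → ℝ, MemF (⊤ : ℕ∞) ℓ U μ0 R ∧
        ∃ s0 > 0, ∀ μ ∈ U, ∀ s ∈ Set.Ioo (0:ℝ) s0,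
          D s μ = s ^ lam μ * (Δ00 μ + Δ10 μ * s + R s μ))
    (hDinv : ∀ η ∈ Set.Ioo ((lam μ0)⁻¹) (min (2 * (lam μ0)⁻¹) 1),
      ∃ R' : ℝ → (Fin N → ℝ) → ℝ, MemF (⊤ : ℕ∞) η U μ0 R' ∧
        ∃ s0 > 0, ∀ μ ∈ U, ∀ s ∈ Set.Ioo (0:ℝ) s0,
          Dinv s μ = s ^ (lam μ)⁻¹ * (Ω00 μ + Ω01 μ * s ^ (lam μ)⁻¹ + R' s μ)) :
    ∃ V ⊆ U, V ∈ 𝓝 μ0 ∧ ∀ μ ∈ V,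
      Ω00 μ = (Δ00 μ) ^ (-(lam μ)⁻¹) ∧
      Ω01 μ = -(lam μ)⁻¹ * (Δ00 μ) ^ (-(1 + 2 * (lam μ)⁻¹)) * Δ10 μ := by
  have hlam0 : 0 < lam μ0 := hlampos μ0 hμ0
  obtain ⟨ℓ, hℓ⟩ := exists_between (lt_min hlamgt one_lt_two)
  obtain ⟨η, hη⟩ := exists_between
    (lt_min (lt_two_mul_self (inv_pos.2 hlam0)) (inv_lt_one_of_one_lt₀ hlamgt))
  obtain ⟨R, hR, hD⟩ := hD ℓ hℓ
  obtain ⟨R', hR', hDinv⟩ := hDinv η hη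
  exact dulac_inverse_coeff_gt_one_general (hlam.continuousOn.continuousAt (hU.mem_nhds hμ0))
    hlam0 hΔ00pos hℓ.1 hη.1 hinv hR hD hR' hDinv
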